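/- Wigner detection (Theorem det_wgn). Fix n ∈ ℕ, λ > 0, A ≥ 1, ρ ∈ (0,1] with ρn ∈ ℕ, and let x ∈ ℝⁿ be a (ρ,A)-sparse vector. Let Y be drawn either from the planted distribution ℙₙ (Y = W + λ x xᵀ with W ~ GOE(n)) or from the null distribution ℚₙ (Y ~ GOE(n)). Let ℓ ∈ ℕ₊, I_{n,ℓ} = {v ∈ {−1,0,1}ⁿ : ‖v‖₀ = ℓ}, T = max_{v ∈ I_{n,ℓ}} vᵀ Y v, and T* = λℓ²/(2A²ρn). Suppose ρ ≤ λ²/(36 A⁴ log n) and ℓ lies in the interval [36 A⁴ ρ² n (log n)/λ², ρn]. Then ℙₙ[T < T*] + ℚₙ[T ≥ T*] ≤ 2 exp(−(λ²/(32 A⁴)) · ℓ²/(ρ² n)). -/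

import Mathlib

open MeasureTheory ProbabilityTheory Filter Matrix

/-- A vector `x ∈ ℝⁿ` is `(ρ,A)`-sparse if `‖x‖₂ = 1`, `‖x‖₀ = ρn`, and every
nonzero entry satisfies `1/(A√(ρn)) ≤ |xᵢ| ≤ A/√(ρn)`. -/
def SparseVec (n : ℕ) (ρ A : ℝ) (x : Fin n → ℝ) : Prop :=
  (∑ i, x i ^ 2) = 1 ∧
  ({i | x i ≠ 0}.ncard : ℝ) = ρ * n ∧
  ∀ i, x i ≠ 0 → 1 / (A * Real.sqrt (ρ * n)) ≤ |x i| ∧ |x i| ≤ A / Real.sqrt (ρ * n)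


/-- Matrices over `ℝ` carry the product (entrywise) measurable structure. -/
instance matrixMeasurableSpace {m n : Type*} :
    MeasurableSpace (Matrix m n ℝ) :=
  (inferInstance : MeasurableSpace (m → n → ℝ))

/-- The Gaussian orthogonal ensemble `GOE(n)`: a random symmetric `n×n` matrix with
independent entries `Wᵢᵢ ~ N(0, 2/n)` on the diagonal and `Wᵢⱼ = Wⱼᵢ ~ N(0, 1/n)`
off the diagonal, realized as a pushforward of i.i.d. standard Gaussians. -/
noncomputable def GOE (n : ℕ) : Measure (Matrix (Fin n) (Fin n) ℝ) :=
  (Measure.pi fun _ : Fin n × Fin n => gaussianReal 0 1).map fun g =>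
    Matrix.of fun i j =>
      if i = j then Real.sqrt (2 / n) * g (i, i)
      else if i < j then Real.sqrt (1 / n) * g (i, j)
      else Real.sqrt (1 / n) * g (j, i)

/-- The search set `I_{n,ℓ} = {v ∈ {−1,0,1}ⁿ : ‖v‖₀ = ℓ}`. -/
def signVecs (n ℓ : ℕ) : Set (Fin n → ℝ) :=
  {v | (∀ i, v i = -1 ∨ v i = 0 ∨ v i = 1) ∧ {i | v i ≠ 0}.ncard = ℓ}

/-- The test statistic `T = max_{v ∈ I_{n,ℓ}} vᵀ M v`. -/
noncomputable def Tstat (n ℓ : ℕ) (M : Matrix (Fin n) (Fin n) ℝ) : ℝ :=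
  sSup ((fun v => v ⬝ᵥ M.mulVec v) '' signVecs n ℓ)

/-- The coefficient of the Gaussian `g p` in the quadratic form `vᵀ W v` of `W ~ GOE(n)`. -/
noncomputable def goeCoeff {n : ℕ} (v : Fin n → ℝ) (p : Fin n × Fin n) : ℝ :=
  v p.1 * v p.2 *
    if p.1 = p.2 then Real.sqrt (2 / n) else if p.1 < p.2 then 2 * Real.sqrt (1 / n) else 0

lemma sum_sum_ite_lt_symm {n : ℕ} (d f : Fin n → Fin n → ℝ) :
    ∑ i, ∑ j, (if i = j then d i j else if i < j then f i j else f j i) =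
      ∑ p : Fin n × Fin n,
        if p.1 = p.2 then d p.1 p.2 else if p.1 < p.2 then 2 * f p.1 p.2 else 0 := by
  have hsplit : ∀ i j : Fin n, (if i = j then d i j else if i < j then f i j else f j i) =
      (if i = j then d i j else if i < j then f i j else 0) + if j < i then f j i else 0 := by
    intro i j
    rcases lt_trichotomy i j with h | h | h
    · simp [h.ne, h, h.not_gt]
    · simp [h]
    · simp [h.ne', h, h.not_gt]
  simp_rw [hsplit, Finset.sum_add_distrib]
  rw [Finset.sum_comm (f := fun i j => if j < i then f j i else 0), Fintype.sum_prod_type]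
  simp_rw [← Finset.sum_add_distrib]
  refine Finset.sum_congr rfl fun i _ => Finset.sum_congr rfl fun j _ => ?_
  split_ifs with h1 h2 <;> first | (subst h1; simp at *) | ring

lemma dotProduct_mulVec_goe {n : ℕ} (v : Fin n → ℝ) (g : Fin n × Fin n → ℝ) :
    v ⬝ᵥ (Matrix.of fun i j : Fin n =>
      if i = j then Real.sqrt (2 / n) * g (i, i)
      else if i < j then Real.sqrt (1 / n) * g (i, j)
      else Real.sqrt (1 / n) * g (j, i)).mulVec v = ∑ p, goeCoeff v p * g p := by
  have h := sum_sum_ite_lt_symm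
    (fun i j => v i * v j * (Real.sqrt (2 / n) * g (i, j)))
    (fun i j => v i * v j * (Real.sqrt (1 / n) * g (i, j)))
  simp only [dotProduct, mulVec, Finset.mul_sum, Matrix.of_apply]
  refine Eq.trans ?_ (h.trans ?_)
  · refine Finset.sum_congr rfl fun i _ => Finset.sum_congr rfl fun j _ => ?_
    split_ifs with h1 h2
    · subst h1; ring
    · ring
    · ring
  · refine Finset.sum_congr rfl fun p _ => ?_
    unfold goeCoeff
    split_ifs <;> ring

lemma sum_goeCoeff_sq {n : ℕ} (v : Fin n → ℝ) :
    ∑ p, goeCoeff v p ^ 2 = 2 / n * (∑ i, v i ^ 2) ^ 2 := by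
  have h := sum_sum_ite_lt_symm (fun i j => 2 / n * (v i ^ 2 * v j ^ 2))
    (fun i j => 2 / n * (v i ^ 2 * v j ^ 2))
  rw [sq (∑ i, v i ^ 2), Finset.sum_mul_sum]
  simp only [Finset.mul_sum]
  refine Eq.trans ?_ (h.symm.trans ?_)
  · refine Finset.sum_congr rfl fun p _ => ?_
    have h2 : Real.sqrt (2 / n) ^ 2 = 2 / n := Real.sq_sqrt (by positivity)
    have h1 : Real.sqrt (1 / n) ^ 2 = 1 / n := Real.sq_sqrt (by positivity)
    unfold goeCoeff
    split_ifs
    · rw [mul_pow, h2]; ring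
    · rw [mul_pow, mul_pow 2, h1]; ring
    · ring
  · refine Finset.sum_congr rfl fun i _ => Finset.sum_congr rfl fun j _ => ?_
    split_ifs <;> ring

lemma hasSubgaussianMGF_id_gaussianReal (v : NNReal) :
    HasSubgaussianMGF id v (gaussianReal 0 v) where
  integrable_exp_mul t := integrable_exp_mul_gaussianReal t
  mgf_le t := by rw [mgf_id_gaussianReal]; simp

lemma hasSubgaussianMGF_pi_sum {ι : Type*} [Fintype ι] (c : ι → ℝ) :
    HasSubgaussianMGF (fun g : ι → ℝ => ∑ p, c p * g p) (Real.toNNReal (∑ p, c p ^ 2))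
      (Measure.pi fun _ : ι => gaussianReal 0 1) := by
  have hind : iIndepFun (fun (p : ι) (g : ι → ℝ) => c p * g p)
      (Measure.pi fun _ : ι => gaussianReal 0 1) :=
    iIndepFun_pi (X := fun p y => c p * y) fun p => by fun_prop
  have hsub : ∀ p ∈ (Finset.univ : Finset ι),
      HasSubgaussianMGF (fun g : ι → ℝ => c p * g p) (Real.toNNReal (c p ^ 2))
        (Measure.pi fun _ : ι => gaussianReal 0 1) := by
    intro p _
    have h0 : HasSubgaussianMGF (fun g : ι → ℝ => g p) 1
        (Measure.pi fun _ : ι => gaussianReal 0 1) := by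
      refine HasSubgaussianMGF.of_map (X := id) (Y := fun g : ι → ℝ => g p)
        (measurable_pi_apply p).aemeasurable ?_
      rw [(measurePreserving_eval (fun _ : ι => gaussianReal 0 1) p).map_eq]
      exact hasSubgaussianMGF_id_gaussianReal 1
    have h1 := h0.const_mul (c p)
    convert h1 using 1
    ext
    rw [Real.coe_toNNReal _ (sq_nonneg (c p))]
    exact (mul_one _).symm
  have h := HasSubgaussianMGF.sum_of_iIndepFun hind hsub
  rwa [← Real.toNNReal_sum_of_nonneg fun p _ => sq_nonneg (c p)] at h

lemma measurable_matrix_apply {m n : Type*} (i : m) (j : n) :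
    Measurable fun M : Matrix m n ℝ => M i j :=
  (measurable_pi_apply j).comp (measurable_pi_apply i)

lemma measurable_matrix_of {α m n : Type*} [MeasurableSpace α] {f : α → Matrix m n ℝ}
    (hf : ∀ i j, Measurable fun a => f a i j) : Measurable f :=
  measurable_pi_lambda _ fun i => measurable_pi_lambda _ fun j => hf i j

lemma measurable_dotProduct_mulVec {n : ℕ} (v : Fin n → ℝ) :
    Measurable fun M : Matrix (Fin n) (Fin n) ℝ => v ⬝ᵥ M.mulVec v := by
  simp only [dotProduct, mulVec]
  exact Finset.measurable_fun_sum _ fun i _ => (Finset.measurable_fun_sum _ fun j _ =>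
    (measurable_matrix_apply i j).mul_const _).const_mul _

lemma measurable_goe_map (n : ℕ) : Measurable fun g : Fin n × Fin n → ℝ =>
    (Matrix.of fun i j : Fin n =>
      if i = j then Real.sqrt (2 / n) * g (i, i)
      else if i < j then Real.sqrt (1 / n) * g (i, j)
      else Real.sqrt (1 / n) * g (j, i)) := by
  refine measurable_matrix_of fun i j => ?_
  simp only [Matrix.of_apply]
  split_ifs <;> fun_prop

lemma hasSubgaussianMGF_goe {n : ℕ} (v : Fin n → ℝ) :
    HasSubgaussianMGF (fun W : Matrix (Fin n) (Fin n) ℝ => v ⬝ᵥ W.mulVec v)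
      (Real.toNNReal (2 / n * (∑ i, v i ^ 2) ^ 2)) (GOE n) := by
  have h := hasSubgaussianMGF_pi_sum (goeCoeff v)
  rw [sum_goeCoeff_sq] at h
  refine h.congr_identDistrib ⟨h.aemeasurable, (measurable_dotProduct_mulVec v).aemeasurable, ?_⟩
  rw [GOE, Measure.map_map (measurable_dotProduct_mulVec v) (measurable_goe_map n)]
  congr 1
  funext g
  exact (dotProduct_mulVec_goe v g).symm

instance (n : ℕ) : IsProbabilityMeasure (GOE n) :=
  Measure.isProbabilityMeasure_map (measurable_goe_map n).aemeasurable

lemma goe_tail {n : ℕ} {v : Fin n → ℝ} {t : ℝ} (ht : 0 ≤ t) :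
    GOE n {W | t ≤ v ⬝ᵥ W.mulVec v} ≤
      ENNReal.ofReal (Real.exp (-t ^ 2 / (2 * (2 / n * (∑ i, v i ^ 2) ^ 2)))) := by
  have h := (hasSubgaussianMGF_goe v).measure_ge_le ht
  rw [Real.coe_toNNReal _ (by positivity)] at h
  rw [← ofReal_measureReal]
  exact ENNReal.ofReal_le_ofReal h

lemma goe_tail_neg {n : ℕ} {v : Fin n → ℝ} {t : ℝ} (ht : 0 ≤ t) :
    GOE n {W | v ⬝ᵥ W.mulVec v ≤ -t} ≤
      ENNReal.ofReal (Real.exp (-t ^ 2 / (2 * (2 / n * (∑ i, v i ^ 2) ^ 2)))) := by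
  have h := (hasSubgaussianMGF_goe v).neg.measure_ge_le ht
  rw [Real.coe_toNNReal _ (by positivity)] at h
  simp only [Pi.neg_apply, le_neg (a := t)] at h
  rw [← ofReal_measureReal]
  exact ENNReal.ofReal_le_ofReal h

lemma finite_signVecs (n ℓ : ℕ) : (signVecs n ℓ).Finite := by
  refine (Set.Finite.pi' fun _ : Fin n => Set.toFinite ({-1, 0, 1} : Set ℝ)).subset ?_
  intro v hv i
  simpa using hv.1 i

lemma neg_mem_signVecs {n ℓ : ℕ} {v : Fin n → ℝ} (hv : v ∈ signVecs n ℓ) :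
    -v ∈ signVecs n ℓ := by
  refine ⟨fun i => ?_, by simpa using hv.2⟩
  rcases hv.1 i with h | h | h <;> simp [h]

lemma sum_sq_of_mem_signVecs {n ℓ : ℕ} {v : Fin n → ℝ} (hv : v ∈ signVecs n ℓ) :
    ∑ i, v i ^ 2 = ℓ := by
  have h : ∀ i, v i ^ 2 = if v i ≠ 0 then 1 else 0 := by
    intro i
    rcases hv.1 i with h | h | h <;> simp [h]
  simp_rw [h]
  rw [Finset.sum_boole, ← hv.2, ← Set.ncard_coe_finset]
  simp

lemma dotProduct_mulVec_le_Tstat {n ℓ : ℕ} {v : Fin n → ℝ} (hv : v ∈ signVecs n ℓ)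
    (M : Matrix (Fin n) (Fin n) ℝ) : v ⬝ᵥ M.mulVec v ≤ Tstat n ℓ M :=
  le_csSup ((finite_signVecs n ℓ).image _).bddAbove ⟨v, hv, rfl⟩

lemma exists_le_dotProduct_mulVec {n ℓ : ℕ} {t : ℝ} (ht : 0 < t)
    {M : Matrix (Fin n) (Fin n) ℝ} (h : t ≤ Tstat n ℓ M) :
    ∃ v ∈ signVecs n ℓ, t ≤ v ⬝ᵥ M.mulVec v := by
  rcases (signVecs n ℓ).eq_empty_or_nonempty with he | hne
  · rw [Tstat, he, Set.image_empty, Real.sSup_empty] at h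
    exact absurd h ht.not_ge
  · obtain ⟨v, hv, hvM⟩ := (hne.image fun v => v ⬝ᵥ M.mulVec v).csSup_mem
      ((finite_signVecs n ℓ).image _)
    exact ⟨v, hv, h.trans_eq hvM.symm⟩

/-- The sign vectors with a given support are covered, up to a global sign, by the half of them
that take the value `1` at a fixed point of the support. -/
lemma exists_finset_signVecs_support {n : ℕ} (S : Finset (Fin n)) (hS : S.Nonempty) :
    ∃ F : Finset (Fin n → ℝ), F.card ≤ 2 ^ (S.card - 1) ∧
      ∀ v : Fin n → ℝ, (∀ i, v i = -1 ∨ v i = 0 ∨ v i = 1) → (∀ i, v i ≠ 0 ↔ i ∈ S) →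
        v ∈ F ∨ -v ∈ F := by
  classical
  obtain ⟨m, hm⟩ := hS
  set F : Finset (Fin n → ℝ) := (S.erase m).powerset.image fun T i =>
    if i ∈ S then (if i ∈ T then -1 else 1) else 0 with hF
  have key : ∀ v : Fin n → ℝ, (∀ i, v i = -1 ∨ v i = 0 ∨ v i = 1) →
      (∀ i, v i ≠ 0 ↔ i ∈ S) → v m = 1 → v ∈ F := by
    intro v hv hvS hvm
    rw [hF, Finset.mem_image]
    refine ⟨S.filter fun i => v i = -1, ?_, ?_⟩
    · rw [Finset.mem_powerset]
      intro i hi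
      rw [Finset.mem_filter] at hi
      refine Finset.mem_erase.2 ⟨?_, hi.1⟩
      rintro rfl
      norm_num [hvm] at hi
    · funext i
      by_cases hi : i ∈ S
      · have h0 := (hvS i).2 hi
        rcases hv i with h | h | h
        · simp [hi, h]
        · exact absurd h h0
        · norm_num [hi, h]
      · have h0 : v i = 0 := by
          by_contra h
          exact hi ((hvS i).1 h)
        simp [hi, h0]
  refine ⟨F, ?_, fun v hv hvS => ?_⟩
  · refine Finset.card_image_le.trans_eq ?_
    rw [Finset.card_powerset, Finset.card_erase_of_mem hm]
  · rcases hv m with h | h | h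
    · refine Or.inr (key (-v) (fun i => ?_) (fun i => by simpa using hvS i) (by simp [h]))
      rcases hv i with h | h | h <;> simp [h]
    · exact absurd h ((hvS m).2 hm)
    · exact Or.inl (key v hv hvS h)

lemma choose_mul_two_pow_pred_le (n ℓ : ℕ) (hℓ : 0 < ℓ) :
    n.choose ℓ * 2 ^ (ℓ - 1) ≤ n ^ ℓ := by
  have h2 : 2 ^ (ℓ - 1) ≤ ℓ.factorial := by
    have h := @Nat.factorial_mul_pow_le_factorial 1 (ℓ - 1)
    rwa [Nat.factorial_one, one_mul, Nat.add_sub_cancel' hℓ] at h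
  calc n.choose ℓ * 2 ^ (ℓ - 1) ≤ n.choose ℓ * ℓ.factorial := Nat.mul_le_mul_left _ h2
    _ = n.descFactorial ℓ := by rw [Nat.descFactorial_eq_factorial_mul_choose, mul_comm]
    _ ≤ n ^ ℓ := Nat.descFactorial_le_pow n ℓ

/-- Up to a global sign there are at most `n ^ ℓ` vectors in `signVecs n ℓ`. -/
lemma exists_finset_signVecs (n ℓ : ℕ) (hℓ : 0 < ℓ) :
    ∃ F : Finset (Fin n → ℝ), F.card ≤ n ^ ℓ ∧ (∀ v ∈ F, v ∈ signVecs n ℓ) ∧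
      ∀ v ∈ signVecs n ℓ, v ∈ F ∨ -v ∈ F := by
  classical
  choose! F hFcard hF using exists_finset_signVecs_support (n := n)
  refine ⟨((Finset.univ.powersetCard ℓ).biUnion F).filter (· ∈ signVecs n ℓ), ?_, ?_, ?_⟩
  · refine (Finset.card_filter_le _ _).trans ?_
    refine (Finset.card_biUnion_le_card_mul _ _ (2 ^ (ℓ - 1)) fun S hS => ?_).trans ?_
    · have hc := (Finset.mem_powersetCard.1 hS).2
      have h := hFcard S (Finset.card_pos.1 (hc ▸ hℓ))
      rwa [hc] at h
    · rw [Finset.card_powersetCard, Finset.card_univ, Fintype.card_fin]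
      exact choose_mul_two_pow_pred_le n ℓ hℓ
  · exact fun v hv => (Finset.mem_filter.1 hv).2
  · intro v hv
    set S : Finset (Fin n) := Finset.univ.filter fun i => v i ≠ 0 with hS
    have hc : S.card = ℓ := by
      rw [← hv.2, ← Set.ncard_coe_finset]
      simp [hS]
    have hSm : S ∈ Finset.univ.powersetCard ℓ :=
      Finset.mem_powersetCard.2 ⟨Finset.subset_univ _, hc⟩
    rcases hF S (Finset.card_pos.1 (hc ▸ hℓ)) v hv.1 (by simp [hS]) with h | h
    · exact Or.inl (Finset.mem_filter.2 ⟨Finset.mem_biUnion.2 ⟨S, hSm, h⟩, hv⟩)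
    · exact Or.inr (Finset.mem_filter.2
        ⟨Finset.mem_biUnion.2 ⟨S, hSm, h⟩, neg_mem_signVecs hv⟩)

lemma goe_le_Tstat_le {n ℓ : ℕ} (hℓ : 0 < ℓ) {t : ℝ} (ht : 0 < t) :
    GOE n {Y | t ≤ Tstat n ℓ Y} ≤
      ENNReal.ofReal (n ^ ℓ * Real.exp (-t ^ 2 / (2 * (2 / n * (ℓ : ℝ) ^ 2)))) := by
  obtain ⟨F, hcard, hmem, hcov⟩ := exists_finset_signVecs n ℓ hℓ
  have hsub : {Y | t ≤ Tstat n ℓ Y} ⊆ ⋃ v ∈ F, {Y | t ≤ v ⬝ᵥ Y.mulVec v} := by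
    intro Y hY
    obtain ⟨v, hv, hvY⟩ := exists_le_dotProduct_mulVec ht hY
    rcases hcov v hv with h | h
    · exact Set.mem_biUnion h hvY
    · refine Set.mem_biUnion h ?_
      simpa [mulVec_neg] using hvY
  calc GOE n {Y | t ≤ Tstat n ℓ Y}
      ≤ ∑ v ∈ F, GOE n {Y | t ≤ v ⬝ᵥ Y.mulVec v} :=
        (measure_mono hsub).trans (measure_biUnion_finset_le _ _)
    _ ≤ ∑ _v ∈ F, ENNReal.ofReal (Real.exp (-t ^ 2 / (2 * (2 / n * (ℓ : ℝ) ^ 2)))) := by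
        refine Finset.sum_le_sum fun v hv => ?_
        have h := goe_tail (v := v) ht.le
        rwa [sum_sq_of_mem_signVecs (hmem v hv)] at h
    _ ≤ ENNReal.ofReal (n ^ ℓ * Real.exp (-t ^ 2 / (2 * (2 / n * (ℓ : ℝ) ^ 2)))) := by
        rw [Finset.sum_const, nsmul_eq_mul, ENNReal.ofReal_mul (by positivity)]
        gcongr
        rw [ENNReal.ofReal_pow (by positivity), ENNReal.ofReal_natCast]
        exact_mod_cast hcard

/-- A sparse vector is well correlated with some vector of the search set. -/
lemma SparseVec.exists_signVecs {n ℓ : ℕ} {ρ A : ℝ} {x : Fin n → ℝ} (hx : SparseVec n ρ A x)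
    (hℓ : (ℓ : ℝ) ≤ ρ * n) :
    ∃ v ∈ signVecs n ℓ, ℓ * (1 / (A * Real.sqrt (ρ * n))) ≤ v ⬝ᵥ x := by
  classical
  have hcard : ℓ ≤ (Finset.univ.filter fun i => x i ≠ 0).card := by
    rw [← Set.ncard_coe_finset]
    have h := hx.2.1 ▸ hℓ
    simpa using h
  obtain ⟨S, hSsub, hS⟩ := Finset.exists_subset_card_eq hcard
  have hS0 : ∀ i ∈ S, x i ≠ 0 := fun i hi => (Finset.mem_filter.1 (hSsub hi)).2
  refine ⟨fun i => if i ∈ S then SignType.sign (x i) else 0, ⟨fun i => ?_, ?_⟩, ?_⟩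
  · by_cases hi : i ∈ S
    · rcases (hS0 i hi).lt_or_gt with h | h <;> simp [hi, h]
    · simp [hi]
  · rw [← hS, ← Set.ncard_coe_finset]
    congr 1
    ext i
    have h : ¬(SignType.sign (x i) : ℝ) = 0 ↔ x i ≠ 0 := by
      rcases lt_trichotomy (x i) 0 with h | h | h
      · simp [h, h.ne]
      · simp [h]
      · simp [h, h.ne']
    simpa [h] using hS0 i
  · have hsum : (fun i => if i ∈ S then (SignType.sign (x i) : ℝ) else 0) ⬝ᵥ x =
        ∑ i ∈ S, |x i| := by
      simp only [dotProduct, ite_mul, zero_mul, sign_mul_self, Finset.sum_ite_mem,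
        Finset.univ_inter]
    rw [hsum, ← hS, ← nsmul_eq_mul]
    exact Finset.card_nsmul_le_sum _ _ _ fun i hi => (hx.2.2 i (hS0 i hi)).1

lemma goe_map_Tstat_lt_le {n ℓ : ℕ} {lam t : ℝ} {x v : Fin n → ℝ} (hv : v ∈ signVecs n ℓ)
    (ht : 0 ≤ t) (hsig : 2 * t ≤ lam * (v ⬝ᵥ x) ^ 2) :
    (GOE n).map (fun W => W + lam • vecMulVec x x) {Y | Tstat n ℓ Y < t} ≤
      ENNReal.ofReal (Real.exp (-t ^ 2 / (2 * (2 / n * (ℓ : ℝ) ^ 2)))) := by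
  have hmeas : Measurable fun W : Matrix (Fin n) (Fin n) ℝ => W + lam • vecMulVec x x :=
    measurable_matrix_of fun i j => (measurable_matrix_apply i j).add_const _
  have htail := goe_tail_neg (v := v) ht
  rw [sum_sq_of_mem_signVecs hv] at htail
  refine (measure_mono (t := {Y | v ⬝ᵥ Y.mulVec v < t})
    fun Y hY => (dotProduct_mulVec_le_Tstat hv Y).trans_lt hY).trans ?_
  rw [Measure.map_apply hmeas
    (measurableSet_lt (measurable_dotProduct_mulVec v) measurable_const)]
  refine (measure_mono fun W hW => ?_).trans htail
  have hquad : v ⬝ᵥ (lam • vecMulVec x x).mulVec v = lam * (v ⬝ᵥ x) ^ 2 := by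
    simp only [smul_mulVec, vecMulVec_mulVec, op_smul_eq_smul, dotProduct_smul, smul_eq_mul,
      dotProduct_comm x v]
    ring
  simp only [Set.mem_preimage, Set.mem_ofPred_eq, add_mulVec, dotProduct_add, hquad] at hW ⊢
  linarith

lemma pow_mul_exp_neg_two_mul_le {n ℓ : ℕ} (hn : 0 < n) {E : ℝ} (hE : ℓ * Real.log n ≤ E) :
    (n : ℝ) ^ ℓ * Real.exp (-(2 * E)) ≤ Real.exp (-E) := by
  have hpow : (n : ℝ) ^ ℓ = Real.exp (ℓ * Real.log n) := by
    rw [Real.exp_nat_mul, Real.exp_log (by exact_mod_cast hn)]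
  rw [hpow, ← Real.exp_add, Real.exp_le_exp]
  linarith

/-- **Wigner detection** (Theorem det_wgn). For a `(ρ,A)`-sparse signal `x`, with
`Y = W + λxxᵀ` (planted, `W ~ GOE(n)`) or `Y ~ GOE(n)` (null), threshold
`T* = λℓ²/(2A²ρn)`, and the stated conditions on `ρ` and `ℓ`, the total failure
probability satisfies `ℙₙ[T < T*] + ℚₙ[T ≥ T*] ≤ 2 exp(−(λ²/(32A⁴))·ℓ²/(ρ²n))`. -/
theorem wigner_detection (n : ℕ) (hn : 0 < n)
    (lam A ρ : ℝ) (hlam : 0 < lam) (hA : 1 ≤ A) (hρ0 : 0 < ρ) (hρ1 : ρ ≤ 1)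
    (x : Fin n → ℝ) (hx : SparseVec n ρ A x)
    (ℓ : ℕ) (hℓ : 0 < ℓ)
    (hρcond : ρ ≤ lam ^ 2 / (36 * A ^ 4) * (1 / Real.log n))
    (hℓlo : 36 * A ^ 4 / lam ^ 2 * (ρ ^ 2 * n * Real.log n) ≤ (ℓ : ℝ))
    (hℓhi : (ℓ : ℝ) ≤ ρ * n) :
    (GOE n).map (fun W => W + lam • vecMulVec x x)
        {Y | Tstat n ℓ Y < lam * ℓ ^ 2 / (2 * A ^ 2 * ρ * n)} +
      GOE n {Y | lam * ℓ ^ 2 / (2 * A ^ 2 * ρ * n) ≤ Tstat n ℓ Y} ≤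
      ENNReal.ofReal
        (2 * Real.exp (-(lam ^ 2 / (32 * A ^ 4)) * (ℓ ^ 2 / (ρ ^ 2 * n)))) := by
  have hn' : (0 : ℝ) < n := by exact_mod_cast hn
  have hℓ' : (0 : ℝ) < ℓ := by exact_mod_cast hℓ
  have hA0 : 0 < A := by linarith
  have hlog : 0 ≤ Real.log n := Real.log_natCast_nonneg n
  set t : ℝ := lam * ℓ ^ 2 / (2 * A ^ 2 * ρ * n) with ht_def
  have ht : 0 < t := by positivity
  set E : ℝ := lam ^ 2 / (32 * A ^ 4) * (ℓ ^ 2 / (ρ ^ 2 * n)) with hE_def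
  have hexp : -t ^ 2 / (2 * (2 / n * (ℓ : ℝ) ^ 2)) = -(2 * E) := by
    rw [ht_def, hE_def]
    field_simp
    norm_num
  have hE0 : 0 ≤ E := by positivity
  have hE : ℓ * Real.log n ≤ E := by
    have h := mul_le_mul_of_nonneg_left hℓlo
      (show 0 ≤ lam ^ 2 / (32 * A ^ 4) * (ℓ / (ρ ^ 2 * n)) by positivity)
    have hl : lam ^ 2 / (32 * A ^ 4) * (ℓ / (ρ ^ 2 * n)) *
        (36 * A ^ 4 / lam ^ 2 * (ρ ^ 2 * n * Real.log n)) = 36 / 32 * (ℓ * Real.log n) := by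
      field_simp
    have hr : lam ^ 2 / (32 * A ^ 4) * (ℓ / (ρ ^ 2 * n)) * ℓ = E := by
      rw [hE_def]
      ring
    rw [hl, hr] at h
    have : 0 ≤ ℓ * Real.log n := by positivity
    linarith
  obtain ⟨v, hv, hvx⟩ := hx.exists_signVecs hℓhi
  have hsig : 2 * t ≤ lam * (v ⬝ᵥ x) ^ 2 := by
    have hsq : (ℓ * (1 / (A * Real.sqrt (ρ * n)))) ^ 2 ≤ (v ⬝ᵥ x) ^ 2 :=
      pow_le_pow_left₀ (by positivity) hvx 2
    have hval : 2 * t = lam * (ℓ * (1 / (A * Real.sqrt (ρ * n)))) ^ 2 := by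
      rw [mul_pow, div_pow, mul_pow, Real.sq_sqrt (by positivity), ht_def]
      field_simp
    rw [hval]
    exact mul_le_mul_of_nonneg_left hsq hlam.le
  have hplanted := goe_map_Tstat_lt_le hv ht.le hsig
  have hnull := goe_le_Tstat_le (n := n) hℓ ht
  rw [hexp] at hplanted hnull
  refine (add_le_add hplanted hnull).trans ?_
  rw [← ENNReal.ofReal_add (by positivity) (by positivity), neg_mul]
  refine ENNReal.ofReal_le_ofReal ?_
  have h1 : Real.exp (-(2 * E)) ≤ Real.exp (-E) := Real.exp_le_exp.2 (by linarith)
  have h2 := pow_mul_exp_neg_two_mul_le hn hE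
  linarith
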